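/- Let r ∈ ℕ and let 𝒞 be a hereditary class of finite simple graphs such that every graph in 𝒞 is an r-bounded perturbation of some circle graph. Then 𝒞 has bounded twin-width if and only if 𝒞 does not contain all permutation graphs, i.e., if and only if there exists a permutation graph H such that no graph in 𝒞 is isomorphic to H. -/

import Mathlib

open Finset

def IsHomog {V : Type} (G : SimpleGraph V) (A B : Finset V) : Prop :=
  (∀ a ∈ A, ∀ b ∈ B, G.Adj a b) ∨ (∀ a ∈ A, ∀ b ∈ B, ¬ G.Adj a b)

noncomputable def redDegree {V : Type} [Fintype V] [DecidableEq V] (G : SimpleGraph V)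
    (P : Finpartition (univ : Finset V)) (A : Finset V) : ℕ :=
  letI := Classical.decPred fun B : Finset V => ¬ IsHomog G A B
  ((P.parts.erase A).filter fun B => ¬ IsHomog G A B).card

def IsMerge {V : Type} [Fintype V] [DecidableEq V]
    (P Q : Finpartition (univ : Finset V)) : Prop :=
  ∃ A ∈ P.parts, ∃ B ∈ P.parts, A ≠ B ∧
    Q.parts = insert (A ∪ B) ((P.parts.erase A).erase B)

def TwinWidthLE {V : Type} [Fintype V] [DecidableEq V] (G : SimpleGraph V) (d : ℕ) : Prop :=
  ∃ L : List (Finpartition (univ : Finset V)),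
    (∃ P₀, L.head? = some P₀ ∧ ∀ A ∈ P₀.parts, A.card = 1) ∧
    (∃ P₁, L.getLast? = some P₁ ∧ P₁.parts.card ≤ 1) ∧
    List.Chain' IsMerge L ∧
    ∀ P ∈ L, ∀ A ∈ P.parts, redDegree G P A ≤ d

def IsCircleGraph {n : ℕ} (G : SimpleGraph (Fin n)) : Prop :=
  ∃ l r : Fin n → ℚ,
    (∀ v, l v < r v) ∧
    Function.Injective (fun p : Fin n × Bool => if p.2 then r p.1 else l p.1) ∧
    ∀ u v : Fin n, u ≠ v →
      (G.Adj u v ↔ (l u < l v ∧ l v < r u ∧ r u < r v) ∨ (l v < l u ∧ l u < r v ∧ r v < r u))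

def IsPermutationGraph {n : ℕ} (G : SimpleGraph (Fin n)) : Prop :=
  ∃ L1 L2 : LinearOrder (Fin n), ∀ u v : Fin n, u ≠ v →
    (G.Adj u v ↔ (L1.lt u v ∧ L2.lt v u) ∨ (L1.lt v u ∧ L2.lt u v))

def IsInducedSubgraphOf {m n : ℕ} (H : SimpleGraph (Fin m)) (G : SimpleGraph (Fin n)) : Prop :=
  ∃ f : Fin m ↪ Fin n, ∀ u v, H.Adj u v ↔ G.Adj (f u) (f v)

def Hereditary (C : ∀ n : ℕ, Set (SimpleGraph (Fin n))) : Prop :=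
  ∀ (m n : ℕ) (H : SimpleGraph (Fin m)) (G : SimpleGraph (Fin n)),
    G ∈ C n → IsInducedSubgraphOf H G → H ∈ C m

/-- The elementary perturbation of `G` on the vertex subset `X`: the adjacency
relation is complemented on all pairs of distinct vertices of `X`. -/
def ElemPerturb {V : Type} (G : SimpleGraph V) (X : Set V) : SimpleGraph V where
  Adj u v := u ≠ v ∧ Xor' (G.Adj u v) (u ∈ X ∧ v ∈ X)
  symm := by
    constructor
    intro u v h
    refine ⟨Ne.symm h.1, ?_⟩
    rcases h.2 with ⟨h1, h2⟩ | ⟨h1, h2⟩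
    · exact Or.inl ⟨h1.symm, fun c => h2 ⟨c.2, c.1⟩⟩
    · exact Or.inr ⟨⟨h1.2, h1.1⟩, fun c => h2 c.symm⟩
  loopless := ⟨fun v h => h.1 rfl⟩

/-- `G` is obtained from `G₀` by a sequence of at most `r` elementary
perturbations. -/
def BoundedPerturbOf {V : Type} (r : ℕ) (G₀ G : SimpleGraph V) : Prop :=
  ∃ L : List (Set V), L.length ≤ r ∧ G = L.foldl ElemPerturb G₀


theorem tww_lower {n t : ℕ} (G : SimpleGraph (Fin n)) (hn : 2 ≤ n) (h : TwinWidthLE G t) :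
    ∃ u v : Fin n, u ≠ v ∧ ∀ S : Finset (Fin n),
      (∀ w ∈ S, w ≠ u ∧ w ≠ v ∧ ¬ (G.Adj u w ↔ G.Adj v w)) → S.card ≤ t := by
  classical
  obtain ⟨L, ⟨P₀, hP₀, hs⟩, ⟨P₁, hP₁, hc⟩, hch, hd⟩ := h
  match L, hP₀, hP₁, hch, hd with
  | [P], hP₀, hP₁, hch, hd =>
    simp at hP₀ hP₁
    subst hP₀
    subst hP₁
    have := P.sum_card_parts
    rw [Finset.sum_congr rfl hs] at this
    simp at this
    omega
  | P :: Q :: L', hP₀, hP₁, hch, hd =>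
    simp at hP₀
    subst hP₀
    have hm : IsMerge P Q := (List.isChain_cons_cons.1 hch).1
    obtain ⟨A, hA, B, hB, hAB, hQ⟩ := hm
    obtain ⟨u, rfl⟩ := Finset.card_eq_one.1 (hs A hA)
    obtain ⟨v, rfl⟩ := Finset.card_eq_one.1 (hs B hB)
    have huv : u ≠ v := fun h => hAB (by rw [h])
    refine ⟨u, v, huv, fun S hS => ?_⟩
    have h1 := hd Q (by simp) ({u} ∪ {v}) (by rw [hQ]; exact Finset.mem_insert_self _ _)
    refine le_trans ?_ h1
    unfold redDegree
    refine Finset.card_le_card_of_injOn (fun w => ({w} : Finset (Fin n))) ?_ ?_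
    · intro w hw
      obtain ⟨h1, h2, h3⟩ := hS w hw
      simp only [Finset.coe_filter, Set.mem_ofPred_eq, Finset.mem_erase]
      obtain ⟨C, hC, hwC⟩ := P.exists_mem (Finset.mem_univ w)
      obtain ⟨w', rfl⟩ := Finset.card_eq_one.1 (hs C hC)
      simp at hwC
      subst hwC
      refine ⟨⟨?_, ?_⟩, ?_⟩
      · intro h
        have : u ∈ ({w} : Finset (Fin n)) := by rw [h]; simp
        simp at this
        exact h1 this.symm
      · rw [hQ]
        simp [hC, h1, h2]
      · rintro (h | h)
        · exact h3 (by simp [h u (by simp) w (by simp), h v (by simp) w (by simp)])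
        · exact h3 (by simp [h u (by simp) w (by simp), h v (by simp) w (by simp)])
    · intro x _ y _ hxy
      simpa using hxy

def gridAdj (k : ℕ) (u v : Fin k × Fin k) : Prop :=
  ((u.1 < v.1 ∨ u.1 = v.1 ∧ u.2 < v.2) ∧ (v.2 < u.2 ∨ v.2 = u.2 ∧ u.1 < v.1)) ∨
  ((v.1 < u.1 ∨ v.1 = u.1 ∧ v.2 < u.2) ∧ (u.2 < v.2 ∨ u.2 = v.2 ∧ v.1 < u.1))

theorem grid_dist_aux (k : ℕ) (u v : Fin k × Fin k) (h : u.1 < v.1 ∨ u.1 = v.1 ∧ u.2 < v.2) :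
    ∃ (g : Fin k → Fin k × Fin k) (i₀ : Fin k), Function.Injective g ∧ ∀ i, i ≠ i₀ →
      g i ≠ u ∧ g i ≠ v ∧ ¬ (gridAdj k u (g i) ↔ gridAdj k v (g i)) := by
  obtain ⟨a, b⟩ := u
  obtain ⟨c, d⟩ := v
  simp only [gridAdj, Prod.mk.injEq, ne_eq] at *
  rcases lt_trichotomy a c with hac | hac | hac
  · rcases lt_trichotomy b d with hbd | hbd | hbd
    · refine ⟨fun i => if i ≤ c then (i, b) else (i, d), a, ?_, ?_⟩
      · intro i j hij; grind
      · intro i hi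
        by_cases hic : i ≤ c <;> simp only [hic, if_true, if_false] <;> grind
    · refine ⟨fun i => if i ≤ b then (c, i) else (a, i), b, ?_, ?_⟩
      · intro i j hij; grind
      · intro i hi
        by_cases hic : i ≤ b <;> simp only [hic, if_true, if_false] <;> grind
    · refine ⟨fun i => if i ≤ b then (c, i) else (a, i), d, ?_, ?_⟩
      · intro i j hij; grind
      · intro i hi
        by_cases hic : i ≤ b <;> simp only [hic, if_true, if_false] <;> grind
  · refine ⟨fun i => if i ≤ a then (i, b) else (i, d), a, ?_, ?_⟩
    · intro i j hij; grind
    · intro i hi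
      by_cases hic : i ≤ a <;> simp only [hic, if_true, if_false] <;> grind
  · grind

theorem grid_dist (k : ℕ) (u v : Fin k × Fin k) (h : u ≠ v) :
    ∃ (g : Fin k → Fin k × Fin k) (i₀ : Fin k), Function.Injective g ∧ ∀ i, i ≠ i₀ →
      g i ≠ u ∧ g i ≠ v ∧ ¬ (gridAdj k u (g i) ↔ gridAdj k v (g i)) := by
  by_cases h1 : u.1 < v.1 ∨ u.1 = v.1 ∧ u.2 < v.2
  · exact grid_dist_aux k u v h1
  · have h2 : v.1 < u.1 ∨ v.1 = u.1 ∧ v.2 < u.2 := by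
      rw [Ne, Prod.ext_iff] at h
      grind
    obtain ⟨g, i, hg, hi⟩ := grid_dist_aux k v u h2
    exact ⟨g, i, hg, fun j hj => ⟨(hi j hj).2.1, (hi j hj).1, fun h => (hi j hj).2.2 h.symm⟩⟩

def gridGraph (k : ℕ) : SimpleGraph (Fin (k * k)) where
  Adj u v := gridAdj k (finProdFinEquiv.symm u) (finProdFinEquiv.symm v)
  symm := ⟨fun u v h => by unfold gridAdj at *; tauto⟩
  loopless := ⟨fun u h => by simp [gridAdj] at h⟩

theorem gridGraph_perm (k : ℕ) : IsPermutationGraph (gridGraph k) := by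
  refine ⟨LinearOrder.lift' (fun x => toLex (finProdFinEquiv.symm x) : Fin (k*k) → Fin k ×ₗ Fin k)
      (fun x y h => finProdFinEquiv.symm.injective (toLex.injective h)),
    LinearOrder.lift' (fun x => toLex ((finProdFinEquiv.symm x).2,
      OrderDual.toDual (finProdFinEquiv.symm x).1) : Fin (k*k) → Fin k ×ₗ (Fin k)ᵒᵈ) ?_, ?_⟩
  · intro x y h
    have h' := toLex.injective h
    simp only [Prod.mk.injEq] at h'
    exact finProdFinEquiv.symm.injective (Prod.ext (OrderDual.toDual.injective h'.2) h'.1)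
  · intro u v _
    have e1 : ∀ x y : Fin (k * k), (toLex (finProdFinEquiv.symm x) : Fin k ×ₗ Fin k) <
        toLex (finProdFinEquiv.symm y) ↔ _ := fun x y => Prod.Lex.toLex_lt_toLex
    have e2 : ∀ x y : Fin (k * k), (toLex ((finProdFinEquiv.symm x).2,
        OrderDual.toDual (finProdFinEquiv.symm x).1) : Fin k ×ₗ (Fin k)ᵒᵈ) <
        toLex ((finProdFinEquiv.symm y).2,
        OrderDual.toDual (finProdFinEquiv.symm y).1) ↔ _ := fun x y => Prod.Lex.toLex_lt_toLex
    exact (or_congr (and_congr (e1 u v) (e2 v u)) (and_congr (e1 v u) (e2 u v))).symm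

theorem gridGraph_tww (t : ℕ) : ¬ TwinWidthLE (gridGraph (t + 2)) t := by
  classical
  intro h
  obtain ⟨u, v, huv, hS⟩ := tww_lower _ (by nlinarith) h
  obtain ⟨g, i, hg, hi⟩ := grid_dist (t+2) (finProdFinEquiv.symm u) (finProdFinEquiv.symm v)
    (fun h => huv (finProdFinEquiv.symm.injective h))
  have := hS ((Finset.univ.erase i).image (fun j => finProdFinEquiv (g j))) ?_
  · rw [Finset.card_image_of_injective _ (show Function.Injective (fun j => finProdFinEquiv (g j)) from finProdFinEquiv.injective.comp hg)] at this
    simp at this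
  · intro w hw
    simp only [Finset.mem_image, Finset.mem_erase] at hw
    obtain ⟨j, ⟨hj, _⟩, rfl⟩ := hw
    obtain ⟨h1, h2, h3⟩ := hi j hj
    refine ⟨fun h => h1 (by rw [← h]; simp), fun h => h2 (by rw [← h]; simp), ?_⟩
    change ¬ (gridAdj _ _ _ ↔ gridAdj _ _ _)
    rwa [Equiv.symm_apply_apply]

def PContains {k : ℕ} (σ : Equiv.Perm (Fin k)) (A : Finset (ℕ × ℕ)) : Prop :=
  ∃ a b : Fin k → ℕ, StrictMono a ∧ StrictMono b ∧ ∀ i, (a i, b (σ i)) ∈ A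

theorem pcontains_swap {k : ℕ} {σ : Equiv.Perm (Fin k)} {A : Finset (ℕ × ℕ)}
    (h : PContains σ⁻¹ (A.image Prod.swap)) : PContains σ A := by
  obtain ⟨a, b, ha, hb, h⟩ := h
  refine ⟨b, a, hb, ha, fun j => ?_⟩
  have := h (σ j)
  simp only [Finset.mem_image, Prod.exists, Prod.swap_prod_mk, Prod.mk.injEq] at this
  obtain ⟨x, y, hxy, rfl, rfl⟩ := this
  simpa using hxy

/-- Lifting a pattern along a pair of functions reflecting strict inequalities. -/
theorem pcontains_coarse {k s : ℕ} {σ : Equiv.Perm (Fin k)} {A : Finset (ℕ × ℕ)}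
    (h : PContains σ (A.image fun p => (p.1 / s, p.2 / s))) : PContains σ A := by
  obtain ⟨a, b, ha, hb, h⟩ := h
  simp only [Finset.mem_image, Prod.mk.injEq] at h
  choose p hp h1 h2 using h
  refine ⟨fun i => (p i).1, fun j => (p (σ⁻¹ j)).2, ?_, ?_, ?_⟩
  · intro i j hij
    by_contra hc
    have := Nat.div_le_div_right (c := s) (not_lt.1 hc)
    simp only [h1] at this
    exact absurd (ha hij) (not_lt.2 this)
  · intro i j hij
    by_contra hc
    have := Nat.div_le_div_right (c := s) (not_lt.1 hc)
    simp only [h2] at this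
    simp only [← Equiv.Perm.mul_apply, mul_inv_cancel, Equiv.Perm.one_apply] at this
    exact absurd (hb hij) (not_lt.2 this)
  · intro i
    simpa using hp i

theorem div_mem_Ico {s x J : ℕ} (hs : 0 < s) (h : x / s = J) :
    x ∈ Finset.Ico (J * s) (J * s + s) := by
  rw [Finset.mem_Ico]
  subst h
  have := Nat.div_add_mod x s
  have h2 := Nat.mod_lt x hs
  rw [mul_comm] at this
  omega

theorem wide_bound {k s : ℕ} (hs : 0 < s) {σ : Equiv.Perm (Fin k)} {A : Finset (ℕ × ℕ)}
    (hA : ¬ PContains σ A) (J : ℕ) (W : Finset ℕ)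
    (hW : ∀ I ∈ W, k ≤ ((A.filter fun p => p.1 / s = I ∧ p.2 / s = J).image Prod.snd).card) :
    W.card ≤ 2 ^ s * k := by
  by_contra hc
  push Not at hc
  set col : ℕ → Finset ℕ :=
    fun I => (A.filter fun p => p.1 / s = I ∧ p.2 / s = J).image Prod.snd with hcol
  have hmap : ∀ I ∈ W, col I ∈ (Finset.Ico (J * s) (J * s + s)).powerset := by
    intro I _
    rw [Finset.mem_powerset]
    intro x hx
    simp only [hcol, Finset.mem_image, Finset.mem_filter] at hx
    obtain ⟨p, ⟨_, _, h⟩, rfl⟩ := hx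
    exact div_mem_Ico hs h
  obtain ⟨Y, _, hlt⟩ := Finset.exists_lt_card_fiber_of_mul_lt_card_of_maps_to hmap (n := k)
    (by simpa using hc)
  have hk : 0 < ({x ∈ W | col x = Y} : Finset ℕ).card := by omega
  obtain ⟨I₀, hI₀⟩ := Finset.card_pos.1 hk
  rw [Finset.mem_filter] at hI₀
  have hY : k ≤ Y.card := by rw [← hI₀.2]; exact hW _ hI₀.1
  let a := Finset.orderEmbOfCardLe _ hlt.le
  let b := Finset.orderEmbOfCardLe _ hY
  have key : ∀ i : Fin k, ∃ x, x / s = a i ∧ (x, b (σ i)) ∈ A := by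
    intro i
    have h1 : a i ∈ _ := Finset.orderEmbOfCardLe_mem _ hlt.le i
    have h2 : b (σ i) ∈ Y := Finset.orderEmbOfCardLe_mem _ hY (σ i)
    rw [Finset.mem_filter] at h1
    rw [← h1.2] at h2
    simp only [hcol, Finset.mem_image, Finset.mem_filter] at h2
    obtain ⟨p, ⟨hp, h3, _⟩, h4⟩ := h2
    exact ⟨p.1, h3, by rw [← h4]; exact hp⟩
  choose x hx1 hx2 using key
  refine hA ⟨x, b, ?_, b.strictMono, hx2⟩
  intro i j hij
  by_contra hc
  have := Nat.div_le_div_right (c := s) (not_lt.1 hc)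
  simp only [hx1] at this
  exact absurd (a.strictMono hij) (not_lt.2 this)

theorem wide_total {k s n' : ℕ} (hs : 0 < s) {σ : Equiv.Perm (Fin k)} {A : Finset (ℕ × ℕ)}
    (hA : ¬ PContains σ A) (W : Finset (ℕ × ℕ)) (hn : ∀ p ∈ W, p.2 < n')
    (hW : ∀ q ∈ W, k ≤ ((A.filter fun p => p.1 / s = q.1 ∧ p.2 / s = q.2).image Prod.snd).card) :
    W.card ≤ 2 ^ s * k * n' := by
  have := Finset.card_le_mul_card_image_of_maps_to (s := W) (t := Finset.range n')
    (f := Prod.snd) (fun p hp => Finset.mem_range.2 (hn p hp)) (2 ^ s * k) ?_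
  · simpa using this
  · intro J _
    have h1 : ({a ∈ W | a.2 = J} : Finset (ℕ × ℕ)).card
        = (({a ∈ W | a.2 = J} : Finset (ℕ × ℕ)).image Prod.fst).card := by
      symm
      apply Finset.card_image_of_injOn
      intro x hx y hy hxy
      simp at hx hy
      exact Prod.ext hxy (hx.2.trans hy.2.symm)
    rw [h1]
    apply wide_bound hs hA J
    intro I hI
    simp only [Finset.mem_image, Finset.mem_filter] at hI
    obtain ⟨q, ⟨hq, rfl⟩, rfl⟩ := hI
    exact hW q hq

theorem marcus_tardos (k : ℕ) : ∃ c : ℕ, ∀ (n : ℕ) (σ : Equiv.Perm (Fin k)) (A : Finset (ℕ × ℕ)),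
    (∀ p ∈ A, p.1 < n ∧ p.2 < n) → ¬ PContains σ A → A.card ≤ c * n := by
  obtain ⟨s, hs⟩ : ∃ s, s = 4 * k ^ 2 + 4 := ⟨_, rfl⟩
  obtain ⟨c, hc⟩ : ∃ c, c = 4 * (s ^ 2 * (2 ^ s * k)) + s := ⟨_, rfl⟩
  refine ⟨c, fun n => ?_⟩
  induction n using Nat.strong_induction_on with
  | _ n ih =>
  intro σ A hn hA
  have hs0 : 0 < s := by omega
  by_cases hns : n < s
  · have h1 : A ⊆ Finset.range n ×ˢ Finset.range n := by
      intro p hp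
      simpa using hn p hp
    have h2 := Finset.card_le_card h1
    rw [Finset.card_product, Finset.card_range] at h2
    have h3 : n * n ≤ c * n := Nat.mul_le_mul_right _ (by omega)
    omega
  push Not at hns
  set B := A.image (fun p => (p.1 / s, p.2 / s)) with hB
  set n' := n / s + 1 with hn'
  have hBn : ∀ p ∈ B, p.1 < n' ∧ p.2 < n' := by
    intro p hp
    simp only [hB, Finset.mem_image] at hp
    obtain ⟨q, hq, rfl⟩ := hp
    have := hn q hq
    exact ⟨Nat.lt_succ_of_le (Nat.div_le_div_right this.1.le),
      Nat.lt_succ_of_le (Nat.div_le_div_right this.2.le)⟩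
  have hlt : n' < n := by
    have : n / s ≤ n / 4 := Nat.div_le_div_left (by omega) (by norm_num)
    omega
  have hBc := ih n' hlt σ B hBn (fun h => hA (pcontains_coarse h))
  set F : ℕ × ℕ → Finset (ℕ × ℕ) := fun q => A.filter fun p => p.1 / s = q.1 ∧ p.2 / s = q.2 with hF
  set W := B.filter (fun q => k ≤ ((F q).image Prod.snd).card) with hW
  set T := B.filter (fun q => k ≤ ((F q).image Prod.fst).card) with hT
  have hWc : W.card ≤ 2 ^ s * k * n' := by
    apply wide_total hs0 hA
    · intro p hp
      exact (hBn p (Finset.mem_filter.1 hp).1).2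
    · intro p hp
      exact (Finset.mem_filter.1 hp).2
  have hTc : T.card ≤ 2 ^ s * k * n' := by
    have hsw : ¬ PContains σ⁻¹ (A.image Prod.swap) := fun h => hA (pcontains_swap h)
    have := wide_total (n' := n') hs0 hsw (T.image Prod.swap) ?_ ?_
    · rwa [Finset.card_image_of_injective _ Prod.swap_injective] at this
    · intro p hp
      obtain ⟨q, hq, rfl⟩ := Finset.mem_image.1 hp
      exact (hBn q (Finset.mem_filter.1 hq).1).1
    · intro p hp
      obtain ⟨q, hq, rfl⟩ := Finset.mem_image.1 hp
      refine (Finset.mem_filter.1 hq).2.trans (Finset.card_le_card ?_)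
      intro x hx
      simp only [hF, Finset.mem_image, Finset.mem_filter] at hx ⊢
      obtain ⟨y, ⟨h1, h2, h3⟩, rfl⟩ := hx
      exact ⟨y.swap, ⟨⟨y, h1, rfl⟩, h3, h2⟩, rfl⟩
  have hfib : ∀ q ∈ B, (F q).card ≤
      k ^ 2 + (if k ≤ ((F q).image Prod.snd).card then s ^ 2 else 0)
        + (if k ≤ ((F q).image Prod.fst).card then s ^ 2 else 0) := by
    intro q _
    have h1 : F q ⊆ (F q).image Prod.fst ×ˢ (F q).image Prod.snd := by
      intro p hp
      rw [Finset.mem_product]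
      exact ⟨Finset.mem_image_of_mem _ hp, Finset.mem_image_of_mem _ hp⟩
    have h2 := Finset.card_le_card h1
    rw [Finset.card_product] at h2
    have h3 : ((F q).image Prod.fst).card ≤ s := by
      have : (F q).image Prod.fst ⊆ Finset.Ico (q.1 * s) (q.1 * s + s) := by
        intro x hx
        simp only [hF, Finset.mem_image, Finset.mem_filter] at hx
        obtain ⟨y, ⟨_, h2, _⟩, rfl⟩ := hx
        exact div_mem_Ico hs0 h2
      simpa using Finset.card_le_card this
    have h4 : ((F q).image Prod.snd).card ≤ s := by
      have : (F q).image Prod.snd ⊆ Finset.Ico (q.2 * s) (q.2 * s + s) := by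
        intro x hx
        simp only [hF, Finset.mem_image, Finset.mem_filter] at hx
        obtain ⟨y, ⟨_, _, h2⟩, rfl⟩ := hx
        exact div_mem_Ico hs0 h2
      simpa using Finset.card_le_card this
    split_ifs with h5 h6 h6
    · nlinarith
    · nlinarith
    · nlinarith
    · push Not at h5 h6
      nlinarith
  have hsum : A.card ≤ k ^ 2 * B.card + s ^ 2 * W.card + s ^ 2 * T.card := by
    have h1 : A.card = ∑ q ∈ B, (F q).card := by
      rw [Finset.card_eq_sum_card_fiberwise (f := fun p : ℕ × ℕ => (p.1 / s, p.2 / s)) (t := B)]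
      · refine Finset.sum_congr rfl fun q _ => ?_
        congr 1
        ext p
        simp [hF, Prod.ext_iff]
      · intro p hp
        exact Finset.mem_image_of_mem _ hp
    rw [h1]
    refine (Finset.sum_le_sum hfib).trans ?_
    rw [Finset.sum_add_distrib, Finset.sum_add_distrib, ← Finset.sum_filter, ← Finset.sum_filter]
    simp only [Finset.sum_const, smul_eq_mul]
    apply le_of_eq
    ring
  have hn'n : s * n' ≤ 2 * n := by
    have := Nat.div_mul_le_self n s
    rw [hn', mul_add, mul_one, mul_comm]
    omega
  -- arithmetic
  obtain ⟨K, hK⟩ : ∃ K, K = s ^ 2 * (2 ^ s * k) := ⟨_, rfl⟩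
  have e1 : s ^ 2 * W.card ≤ K * n' := by
    rw [hK, mul_assoc]; exact Nat.mul_le_mul_left _ hWc
  have e2 : s ^ 2 * T.card ≤ K * n' := by
    rw [hK, mul_assoc]; exact Nat.mul_le_mul_left _ hTc
  have e3 : k ^ 2 * B.card ≤ k ^ 2 * (c * n') := Nat.mul_le_mul_left _ hBc
  have e4 : 4 * k ^ 2 * n' ≤ 2 * n := le_trans (Nat.mul_le_mul_right _ (by omega)) hn'n
  have e5 : 4 * k ^ 2 * n' * c ≤ 2 * n * c := Nat.mul_le_mul_right _ e4
  have e6 : K * n' ≤ K * n := Nat.mul_le_mul_left _ hlt.le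
  have e7 : 4 * K * n ≤ c * n := Nat.mul_le_mul_right _ (by rw [hc, hK]; omega)
  nlinarith

def TGood {n : ℕ} (G : SimpleGraph (Fin n)) (d : ℕ) (P : Finpartition (univ : Finset (Fin n))) :
    Prop := ∀ A ∈ P.parts, redDegree G P A ≤ d

def TStep {n : ℕ} (G : SimpleGraph (Fin n)) (d : ℕ)
    (P Q : Finpartition (univ : Finset (Fin n))) : Prop := IsMerge P Q ∧ TGood G d Q

theorem list_of_steps {n : ℕ} (G : SimpleGraph (Fin n)) (d : ℕ)
    (P Q : Finpartition (univ : Finset (Fin n))) (h : Relation.ReflTransGen (TStep G d) P Q) :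
    TGood G d P → ∃ L : List (Finpartition (univ : Finset (Fin n))),
      L.head? = some P ∧ L.getLast? = some Q ∧ List.IsChain IsMerge L ∧ ∀ R ∈ L, TGood G d R := by
  induction h using Relation.ReflTransGen.head_induction_on with
  | refl => intro hg; exact ⟨[Q], rfl, rfl, by simp, by simpa using hg⟩
  | @head P P' hs _ ih =>
    intro hg
    obtain ⟨L, h1, h2, h3, h4⟩ := ih hs.2
    match L, h1, h2, h3, h4 with
    | R :: L', h1, h2, h3, h4 =>
      simp at h1
      subst h1
      refine ⟨P :: R :: L', rfl, ?_, List.isChain_cons_cons.2 ⟨hs.1, h3⟩, ?_⟩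
      · rw [List.getLast?_cons_cons]; exact h2
      · intro S hS
        rcases List.mem_cons.1 hS with rfl | hS
        · exact hg
        · exact h4 S hS

theorem exists_merge {n : ℕ} (P Q : Finpartition (univ : Finset (Fin n))) (h : P ≤ Q)
    (hne : P ≠ Q) : ∃ P' : Finpartition (univ : Finset (Fin n)), IsMerge P P' ∧ P ≤ P' ∧ P' ≤ Q ∧
      P'.parts.card < P.parts.card := by
  classical
  have hex : ∃ A ∈ P.parts, ∃ B ∈ P.parts, A ≠ B ∧ ∃ C ∈ Q.parts, A ⊆ C ∧ B ⊆ C := by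
    by_contra hc
    push Not at hc
    apply hne
    have h1 : Q.parts ⊆ P.parts := by
      intro C hC
      obtain ⟨x, hx⟩ := Q.nonempty_of_mem_parts hC
      have hsub : ∀ y ∈ C, P.part y ⊆ C := by
        intro y hy
        obtain ⟨C', hC', hs⟩ := h (P.part_mem.2 (Finset.mem_univ y))
        have : C' = C := Q.eq_of_mem_parts hC' hC (hs (P.mem_part (Finset.mem_univ y))) hy
        rw [← this]; exact hs
      have : C = P.part x := by
        apply Finset.Subset.antisymm
        · intro y hy
          by_contra hyx
          refine hc (P.part x) (P.part_mem.2 (Finset.mem_univ x)) (P.part y)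
            (P.part_mem.2 (Finset.mem_univ y)) ?_ C hC (hsub x hx) (hsub y hy)
          intro he
          exact hyx (he ▸ P.mem_part (Finset.mem_univ y))
        · exact hsub x hx
      rw [this]
      exact P.part_mem.2 (Finset.mem_univ x)
    apply Finpartition.ext
    apply Finset.Subset.antisymm _ h1
    intro A hA
    obtain ⟨C, hC, hAC⟩ := h hA
    obtain ⟨x, hx⟩ := P.nonempty_of_mem_parts hA
    rw [P.eq_of_mem_parts hA (h1 hC) hx (hAC hx)]
    exact hC
  obtain ⟨A, hA, B, hB, hAB, C, hC, hAC, hBC⟩ := hex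
  let P' : Finpartition (univ : Finset (Fin n)) :=
    Finpartition.ofExistsUnique (insert (A ∪ B) ((P.parts.erase A).erase B))
      (fun _ _ => Finset.subset_univ _)
      (by
        intro x _
        by_cases hx : x ∈ A ∪ B
        · refine ⟨A ∪ B, ⟨Finset.mem_insert_self _ _, hx⟩, ?_⟩
          rintro D ⟨hD, hxD⟩
          rcases Finset.mem_insert.1 hD with h | h
          · exact h
          · simp only [Finset.mem_erase] at h
            rcases Finset.mem_union.1 hx with hx | hx
            · exact absurd (P.eq_of_mem_parts h.2.2 hA hxD hx) h.2.1
            · exact absurd (P.eq_of_mem_parts h.2.2 hB hxD hx) h.1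
        · obtain ⟨D, hD, hxD⟩ := P.exists_mem (Finset.mem_univ x)
          rw [Finset.mem_union, not_or] at hx
          refine ⟨D, ⟨Finset.mem_insert_of_mem ?_, hxD⟩, ?_⟩
          · simp only [Finset.mem_erase]
            exact ⟨fun h => hx.2 (h ▸ hxD), fun h => hx.1 (h ▸ hxD), hD⟩
          · rintro E ⟨hE, hxE⟩
            rcases Finset.mem_insert.1 hE with h | h
            · rw [h, Finset.mem_union] at hxE
              exact absurd hxE (not_or.2 hx)
            · simp only [Finset.mem_erase] at h
              exact P.eq_of_mem_parts h.2.2 hD hxE hxD)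
      (by
        intro h
        rcases Finset.mem_insert.1 h with h | h
        · obtain ⟨x, hx⟩ := P.nonempty_of_mem_parts hA
          have : x ∈ A ∪ B := Finset.mem_union_left _ hx
          rw [← h] at this
          simp at this
        · simp only [Finset.mem_erase] at h
          exact P.empty_notMem_parts h.2.2)
  have hP' : P'.parts = insert (A ∪ B) ((P.parts.erase A).erase B) := rfl
  refine ⟨P', ⟨A, hA, B, hB, hAB, hP'⟩, ?_, ?_, ?_⟩
  · intro D hD
    by_cases h1 : D = A
    · exact ⟨A ∪ B, by rw [hP']; simp, by rw [h1]; exact Finset.subset_union_left⟩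
    · by_cases h2 : D = B
      · exact ⟨A ∪ B, by rw [hP']; simp, by rw [h2]; exact Finset.subset_union_right⟩
      · exact ⟨D, by rw [hP']; simp [h1, h2, hD], le_rfl⟩
  · intro D hD
    rw [hP'] at hD
    rcases Finset.mem_insert.1 hD with h1 | h1
    · exact ⟨C, hC, by rw [h1]; exact Finset.union_subset hAC hBC⟩
    · simp only [Finset.mem_erase] at h1
      exact h h1.2.2
  · rw [hP']
    have h1 := Finset.card_insert_le (A ∪ B) ((P.parts.erase A).erase B)
    have h2 := Finset.card_erase_lt_of_mem (s := P.parts.erase A) (a := B)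
      (by simp [hB, hAB.symm])
    have h3 := Finset.card_erase_lt_of_mem hA
    omega

theorem refine_path {n : ℕ} (G : SimpleGraph (Fin n)) (d : ℕ) : ∀ (N : ℕ)
    (P Q : Finpartition (univ : Finset (Fin n))), P.parts.card ≤ N → P ≤ Q →
    (∀ R, P ≤ R → R ≤ Q → TGood G d R) → Relation.ReflTransGen (TStep G d) P Q := by
  intro N
  induction N with
  | zero =>
    intro P Q hN h hR
    by_cases hPQ : P = Q
    · rw [hPQ]
    · obtain ⟨P', _, _, _, h4⟩ := exists_merge P Q h hPQ
      omega
  | succ N ih =>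
    intro P Q hN h hR
    by_cases hPQ : P = Q
    · rw [hPQ]
    · obtain ⟨P', h1, h2, h3, h4⟩ := exists_merge P Q h hPQ
      exact Relation.ReflTransGen.head ⟨h1, hR P' h2 h3⟩
        (ih P' Q (by omega) h3 (fun R hR1 hR2 => hR R (h2.trans hR1) hR2))

def IsKer {n : ℕ} {α : Type} (P : Finpartition (univ : Finset (Fin n))) (κ : Fin n → α) : Prop :=
  ∀ A ∈ P.parts, ∀ a ∈ A, ∀ b, b ∈ A ↔ κ b = κ a

theorem exists_ker {n : ℕ} {α : Type} (κ : Fin n → α) :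
    ∃ P : Finpartition (univ : Finset (Fin n)), IsKer P κ := by
  classical
  refine ⟨Finpartition.ofSetoid (Setoid.ker κ), fun A hA a ha b => ?_⟩
  have h : (Finpartition.ofSetoid (Setoid.ker κ)).part a = A :=
    Finpartition.part_eq_of_mem _ hA ha
  rw [← h, Finpartition.mem_part_ofSetoid_iff_rel]
  exact eq_comm

theorem ker_le {n : ℕ} {α β : Type} {P Q : Finpartition (univ : Finset (Fin n))} {κ : Fin n → α}
    {κ' : Fin n → β} (hP : IsKer P κ) (hQ : IsKer Q κ') (h : ∀ a b, κ a = κ b → κ' a = κ' b) :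
    P ≤ Q := by
  intro A hA
  obtain ⟨x, hx⟩ := P.nonempty_of_mem_parts hA
  obtain ⟨C, hC, hxC⟩ := Q.exists_mem (Finset.mem_univ x)
  refine ⟨C, hC, fun y hy => ?_⟩
  rw [hQ C hC x hxC]
  exact h _ _ ((hP A hA x hx y).1 hy)

theorem red_bound {n : ℕ} {α : Type} (G : SimpleGraph (Fin n))
    {P R : Finpartition (univ : Finset (Fin n))} {κ : Fin n → α} (hP : IsKer P κ) (hPR : P ≤ R)
    (A : Finset (Fin n)) (K : Finset α)
    (h : ∀ B ∈ R.parts, ∀ b ∈ B, ¬ IsHomog G A B → κ b ∈ K) : redDegree G R A ≤ K.card := by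
  classical
  unfold redDegree
  have hrep : ∀ B : Finset (Fin n), ∃ k : Option α, B ∈ R.parts → ∃ b ∈ B, k = some (κ b) := by
    intro B
    by_cases hB : B ∈ R.parts
    · obtain ⟨b, hb⟩ := R.nonempty_of_mem_parts hB
      exact ⟨some (κ b), fun _ => ⟨b, hb, rfl⟩⟩
    · exact ⟨none, fun h => absurd h hB⟩
  choose g hg using hrep
  rw [← Finset.card_map Function.Embedding.some (s := K)]
  refine Finset.card_le_card_of_injOn g ?_ ?_
  · intro B hB
    simp only [Finset.coe_filter, Set.mem_ofPred_eq, Finset.mem_erase] at hB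
    obtain ⟨b, hb, hk⟩ := hg B hB.1.2
    rw [hk]
    simpa using h B hB.1.2 b hb hB.2
  · intro B hB B' hB' he
    simp only [Finset.coe_filter, Set.mem_ofPred_eq, Finset.mem_erase] at hB hB'
    obtain ⟨b, hb, hk⟩ := hg B hB.1.2
    obtain ⟨b', hb', hk'⟩ := hg B' hB'.1.2
    obtain ⟨D, hD, hbD⟩ := P.exists_mem (Finset.mem_univ b)
    have hb'D : b' ∈ D := (hP D hD b hbD b').2 (by
      have : some (κ b') = some (κ b) := by rw [← hk, ← hk', he]
      simpa using this)
    obtain ⟨E, hE, hDE⟩ := hPR hD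
    rw [R.eq_of_mem_parts hB.1.2 hE hb (hDE hbD), R.eq_of_mem_parts hB'.1.2 hE hb' (hDE hb'D)]

theorem perturb_color {V : Type} (L : List (Set V)) : ∀ (G₀ : SimpleGraph V),
    ∃ (f : V → ℕ) (s : ℕ → ℕ → Prop), (∀ v, f v < 2 ^ L.length) ∧
      ∀ u v, u ≠ v → ((L.foldl ElemPerturb G₀).Adj u v ↔ Xor' (G₀.Adj u v) (s (f u) (f v))) := by
  classical
  induction L with
  | nil =>
    intro G₀
    exact ⟨fun _ => 0, fun _ _ => False, by simp, fun u v _ => by simp [Xor', xor_def]⟩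
  | cons X L ih =>
    intro G₀
    obtain ⟨f, s, hf, hs⟩ := ih (ElemPerturb G₀ X)
    refine ⟨fun v => 2 * f v + (if v ∈ X then 1 else 0),
      fun a b => Xor' (a % 2 = 1 ∧ b % 2 = 1) (s (a / 2) (b / 2)), ?_, ?_⟩
    · intro v
      have := hf v
      simp only [List.length_cons, pow_succ]
      split_ifs <;> omega
    · intro u v huv
      rw [List.foldl_cons, hs u v huv]
      have e1 : ∀ w, (2 * f w + (if w ∈ X then 1 else 0)) % 2 = 1 ↔ w ∈ X := by
        intro w; split_ifs with h <;> simp [h] <;> omega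
      have e2 : ∀ w, (2 * f w + (if w ∈ X then 1 else 0)) / 2 = f w := by
        intro w; split_ifs <;> omega
      simp only [e1, e2]
      simp only [ElemPerturb, Xor', xor_def]
      tauto

def dbl {h : ℕ} (τ : Equiv.Perm (Fin h)) : Equiv.Perm (Fin (h + h)) :=
  finSumFinEquiv.symm.trans (((Equiv.sumCongr τ τ).trans (Equiv.sumComm _ _)).trans finSumFinEquiv)

theorem dbl_left {h : ℕ} (τ : Equiv.Perm (Fin h)) (i : Fin h) :
    dbl τ (Fin.castAdd h i) = Fin.natAdd h (τ i) := by
  simp [dbl]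

theorem dbl_right {h : ℕ} (τ : Equiv.Perm (Fin h)) (i : Fin h) :
    dbl τ (Fin.natAdd h i) = Fin.castAdd h (τ i) := by
  simp only [dbl, Equiv.trans_apply, finSumFinEquiv_symm_apply_natAdd, Equiv.sumCongr_apply,
    Sum.map_inr, Equiv.sumComm_apply, Sum.swap_inr, finSumFinEquiv_apply_left]

theorem ca_lt {h : ℕ} {i j : Fin h} (hij : i < j) : Fin.castAdd h i < Fin.castAdd h j := hij

theorem na_lt {h : ℕ} {i j : Fin h} (hij : i < j) : Fin.natAdd h i < Fin.natAdd h j :=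
  Nat.add_lt_add_left (Fin.lt_def.1 hij) h

theorem ca_na_lt {h : ℕ} (i j : Fin h) : Fin.castAdd h i < Fin.natAdd h j :=
  Fin.lt_def.2 (Nat.lt_of_lt_of_le i.2 (Nat.le_add_right h j.1))

def endp {n : ℕ} (l r : Fin n → ℚ) (p : Fin n × Bool) : ℚ := if p.2 then r p.1 else l p.1

def flp {n : ℕ} (p : Fin n × Bool) : Fin n × Bool := (p.1, !p.2)

def pairSet {n : ℕ} (ψ : Fin n × Bool → ℕ) : Finset (ℕ × ℕ) :=
  (univ : Finset (Fin n × Bool)).image (fun p => (ψ p, ψ (flp p)))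

def pairSetC {n : ℕ} (ψ : Fin n × Bool → ℕ) (col : Fin n → ℕ) (c : ℕ) : Finset (ℕ × ℕ) :=
  ((univ : Finset (Fin n × Bool)).filter (fun p => col p.1 = c)).image (fun p => (ψ p, ψ (flp p)))

def CircleRep {n : ℕ} (G : SimpleGraph (Fin n)) (l r : Fin n → ℚ) : Prop :=
    (∀ v, l v < r v) ∧ Function.Injective (endp l r) ∧
    ∀ u v : Fin n, u ≠ v →
      (G.Adj u v ↔ (l u < l v ∧ l v < r u ∧ r u < r v) ∨ (l v < l u ∧ l u < r v ∧ r v < r u))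

theorem extract_aux {n h : ℕ} {G₀ : SimpleGraph (Fin n)} {l r : Fin n → ℚ}
    (hrep : CircleRep G₀ l r) (q : Fin h → Fin n × Bool) (τ₁ τ₂ : Equiv.Perm (Fin h))
    (h1 : ∀ i j, τ₁ i < τ₁ j → endp l r (q i) < endp l r (q j))
    (h2 : ∀ i j, τ₂ i < τ₂ j → endp l r (flp (q i)) < endp l r (flp (q j)))
    (h3 : ∀ i j, endp l r (q i) < endp l r (flp (q j))) :
    (Function.Injective fun i => (q i).1) ∧ ∀ i j, i ≠ j →
      (G₀.Adj (q i).1 (q j).1 ↔ (τ₁ i < τ₁ j ↔ τ₂ i < τ₂ j)) := by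
  have hl : ∀ i, endp l r (q i) = l (q i).1 ∧ endp l r (flp (q i)) = r (q i).1 := by
    intro i
    have := h3 i i
    have h4 := hrep.1 (q i).1
    unfold endp flp at *
    cases hb : (q i).2
    · simp
    · simp [hb] at this
      exact absurd this (not_lt.2 h4.le)
  simp only [(hl _).1, (hl _).2] at h1 h2 h3
  have hinj : Function.Injective fun i => (q i).1 := by
    intro i j hij
    simp only at hij
    by_contra hne
    rcases lt_or_gt_of_ne (fun h => hne (τ₁.injective h)) with h | h
    · have := h1 _ _ h
      rw [hij] at this
      exact lt_irrefl _ this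
    · have := h1 _ _ h
      rw [hij] at this
      exact lt_irrefl _ this
  refine ⟨hinj, fun i j hij => ?_⟩
  rw [hrep.2.2 _ _ (fun h => hij (hinj h))]
  have a1 := h1 i j
  have a2 := h1 j i
  have b1 := h2 i j
  have b2 := h2 j i
  have c1 := h3 i j
  have c2 := h3 j i
  rcases lt_or_gt_of_ne (fun h => hij (τ₁.injective h)) with h | h <;>
  rcases lt_or_gt_of_ne (fun h => hij (τ₂.injective h)) with h' | h' <;>
  grind

theorem extract {n h : ℕ} {G₀ : SimpleGraph (Fin n)} {l r : Fin n → ℚ}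
    (hrep : CircleRep G₀ l r) (ψ : Fin n × Bool → ℕ)
    (hψ : ∀ p q, ψ p < ψ q → endp l r p < endp l r q) (col : Fin n → ℕ) (c : ℕ)
    (τ : Equiv.Perm (Fin h)) (hc : PContains (dbl τ) (pairSetC ψ col c)) :
    ∃ f : Fin h ↪ Fin n, (∀ i, col (f i) = c) ∧
      ∀ i j, i ≠ j → (G₀.Adj (f i) (f j) ↔ (i < j ↔ τ i < τ j)) := by
  obtain ⟨a, b, ha, hb, hab⟩ := hc
  simp only [pairSetC, Finset.mem_image, Finset.mem_filter, Finset.mem_univ, true_and,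
    Prod.mk.injEq] at hab
  choose p hp h1 h2 using hab
  have e1 : ∀ i j, i < j → endp l r (p i) < endp l r (p j) := by
    intro i j hij
    apply hψ
    rw [h1, h1]
    exact ha hij
  have e2 : ∀ i j, dbl τ i < dbl τ j → endp l r (flp (p i)) < endp l r (flp (p j)) := by
    intro i j hij
    apply hψ
    rw [h2, h2]
    exact hb hij
  by_cases hcase : ∀ i j : Fin h, endp l r (p (Fin.castAdd h i)) <
      endp l r (flp (p (Fin.castAdd h j)))
  · obtain ⟨g1, g2⟩ := extract_aux hrep (fun i => p (Fin.castAdd h i)) 1 τ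
      (fun i j hij => e1 _ _ (ca_lt hij))
      (fun i j hij => e2 _ _ (by rw [dbl_left, dbl_left]; exact na_lt hij)) hcase
    exact ⟨⟨_, g1⟩, fun i => hp _, g2⟩
  · push Not at hcase
    obtain ⟨i₀, j₀, h0⟩ := hcase
    have hff : ∀ p : Fin n × Bool, flp (flp p) = p := by intro p; simp [flp]
    obtain ⟨g1, g2⟩ := extract_aux hrep (fun i => flp (p (Fin.natAdd h i))) τ 1
      (fun i j hij => e2 _ _ (by rw [dbl_right, dbl_right]; exact ca_lt hij))
      (fun i j hij => by
        rw [hff, hff]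
        exact e1 _ _ (na_lt hij))
      (fun i j => by
        rw [hff]
        refine lt_of_lt_of_le (e2 _ _ ?_) (h0.trans (e1 _ _ ?_).le)
        · rw [dbl_right, dbl_left]
          exact ca_na_lt _ _
        · exact ca_na_lt _ _)
    refine ⟨⟨_, g1⟩, fun i => hp _, fun i j hij => ?_⟩
    have := g2 i j hij
    simp only [Equiv.Perm.one_apply] at this
    rw [Iff.comm (a := i < j)]
    exact this

def clps (j x : ℕ) : ℕ := if x ≤ j then x else x - 1

theorem merge_count {m N d : ℕ} (S : Finset (ℕ × ℕ)) (hm : 2 ≤ m) (hd : 4 * N ≤ d)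
    (hS : S.card ≤ N * m) (hrow : ∀ i, (S.filter fun p => p.1 = i).card ≤ d) :
    ∃ j, j + 1 < m ∧ ∀ i,
      ((S.image (fun p => (clps j p.1, clps j p.2))).filter fun p => p.1 = i).card ≤ d := by
  have hlt : S.card < (Finset.range (m / 2)).card * (d + 1) := by
    rw [Finset.card_range]
    have h1 : m ≤ 4 * (m / 2) := by omega
    have h2 : N * m ≤ N * (4 * (m / 2)) := Nat.mul_le_mul_left _ h1
    have h3 : 4 * N * (m / 2) ≤ d * (m / 2) := Nat.mul_le_mul_right _ hd
    have h4 : 0 < m / 2 := by omega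
    nlinarith
  obtain ⟨i, hi, hlt⟩ := Finset.exists_card_fiber_lt_of_card_lt_mul (f := fun p : ℕ × ℕ => p.1 / 2)
    hlt
  rw [Finset.mem_range] at hi
  refine ⟨2 * i, by omega, fun i' => ?_⟩
  rw [Finset.filter_image]
  refine Finset.card_image_le.trans ?_
  by_cases h : i' = 2 * i
  · refine le_trans (Finset.card_le_card ?_) (Nat.lt_succ_iff.1 hlt)
    intro p hp
    rw [Finset.mem_filter] at hp ⊢
    refine ⟨hp.1, ?_⟩
    have := hp.2
    simp only [clps] at this
    split_ifs at this <;> omega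
  · refine le_trans (Finset.card_le_card ?_) (hrow (if i' ≤ 2 * i then i' else i' + 1))
    intro p hp
    rw [Finset.mem_filter] at hp ⊢
    refine ⟨hp.1, ?_⟩
    have := hp.2
    simp only [clps] at this
    split_ifs at this ⊢ <;> omega

def vkey {n : ℕ} (ψ : Fin n × Bool → ℕ) (col : Fin n → ℕ) (v : Fin n) : ℕ × ℕ × ℕ :=
  (ψ (v, false), ψ (v, true), col v)

theorem vkey_eq {n : ℕ} {ψ : Fin n × Bool → ℕ} {col : Fin n → ℕ} {u v : Fin n}
    (h : vkey ψ col u = vkey ψ col v) : (∀ s, ψ (u, s) = ψ (v, s)) ∧ col u = col v := by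
  simp only [vkey, Prod.mk.injEq] at h
  refine ⟨fun s => ?_, h.2.2⟩
  cases s
  · exact h.1
  · exact h.2.1

theorem adj_congr {n : ℕ} {G₀ G : SimpleGraph (Fin n)} {l r : Fin n → ℚ}
    (hrep : CircleRep G₀ l r) {col : Fin n → ℕ} {s : ℕ → ℕ → Prop}
    (hG : ∀ u v, u ≠ v → (G.Adj u v ↔ Xor' (G₀.Adj u v) (s (col u) (col v))))
    {ψ : Fin n × Bool → ℕ} (hψ : ∀ p q, ψ p < ψ q → endp l r p < endp l r q)
    {a b a' b' : Fin n} (hab : ∀ x y, ψ (b, x) ≠ ψ (a, y))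
    (ha : vkey ψ col a' = vkey ψ col a) (hb : vkey ψ col b' = vkey ψ col b) :
    G.Adj a' b' ↔ G.Adj a b := by
  obtain ⟨ha1, ha2⟩ := vkey_eq ha
  obtain ⟨hb1, hb2⟩ := vkey_eq hb
  have hne : a ≠ b := fun h => hab true true (by rw [h])
  have hne' : a' ≠ b' := fun h => hab true true (by rw [← ha1, ← hb1, h])
  have e1 : ∀ x y, (endp l r (a', x) < endp l r (b', y) ↔ endp l r (a, x) < endp l r (b, y)) := by
    intro x y
    rcases lt_or_gt_of_ne (hab y x) with h | h
    · have h1 := hψ _ _ h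
      rw [← ha1, ← hb1] at h
      have h2 := hψ _ _ h
      exact ⟨fun h => absurd h h2.not_gt, fun h => absurd h h1.not_gt⟩
    · have h1 := hψ _ _ h
      rw [← ha1, ← hb1] at h
      have h2 := hψ _ _ h
      exact ⟨fun _ => h1, fun _ => h2⟩
  have e2 : ∀ x y, (endp l r (b', x) < endp l r (a', y) ↔ endp l r (b, x) < endp l r (a, y)) := by
    intro x y
    rcases lt_or_gt_of_ne (hab x y) with h | h
    · have h1 := hψ _ _ h
      rw [← ha1, ← hb1] at h
      have h2 := hψ _ _ h
      exact ⟨fun _ => h1, fun _ => h2⟩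
    · have h1 := hψ _ _ h
      rw [← ha1, ← hb1] at h
      have h2 := hψ _ _ h
      exact ⟨fun h => absurd h h2.not_gt, fun h => absurd h h1.not_gt⟩
  have hl : ∀ v, endp l r (v, false) = l v := fun v => by simp [endp]
  have hr : ∀ v, endp l r (v, true) = r v := fun v => by simp [endp]
  have f1 := e1 false false
  have f2 := e1 false true
  have f3 := e1 true true
  have f4 := e2 false false
  have f5 := e2 false true
  have f6 := e2 true true
  simp only [hl, hr] at f1 f2 f3 f4 f5 f6
  have h0 : G₀.Adj a' b' ↔ G₀.Adj a b := by
    rw [hrep.2.2 _ _ hne, hrep.2.2 _ _ hne', f1, f2, f3, f4, f5, f6]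
  rw [hG _ _ hne, hG _ _ hne', h0, ha2, hb2]

theorem main_induct {n : ℕ} {G₀ G : SimpleGraph (Fin n)} {l r : Fin n → ℚ}
    (hrep : CircleRep G₀ l r) {col : Fin n → ℕ} {s : ℕ → ℕ → Prop}
    (hG : ∀ u v, u ≠ v → (G.Adj u v ↔ Xor' (G₀.Adj u v) (s (col u) (col v))))
    (Cn N d : ℕ) (hcol : ∀ v, col v < Cn) (hd : 4 * N ≤ d)
    (hMT : ∀ (m : ℕ) (ψ : Fin n × Bool → ℕ), (∀ p, ψ p < m) →
      (∀ p q, ψ p < ψ q → endp l r p < endp l r q) → (pairSet ψ).card ≤ N * m) :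
    ∀ (m : ℕ) (ψ : Fin n × Bool → ℕ) (P : Finpartition (univ : Finset (Fin n))), (∀ p, ψ p < m) →
      (∀ p q, ψ p < ψ q → endp l r p < endp l r q) →
      (∀ i, ((pairSet ψ).filter fun p => p.1 = i).card ≤ d) →
      IsKer P (vkey ψ col) →
      ∃ Q, Relation.ReflTransGen (TStep G (8 * (d * Cn) + Cn)) P Q ∧ Q.parts.card ≤ 1 := by
  classical
  intro m
  induction m with
  | zero =>
    intro ψ P hm _ _ hP
    have hn : IsEmpty (Fin n) := ⟨fun v => absurd (hm (v, true)) (by omega)⟩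
    refine ⟨P, Relation.ReflTransGen.refl, ?_⟩
    rw [Finset.card_le_one]
    intro A hA
    obtain ⟨x, hx⟩ := P.nonempty_of_mem_parts hA
    exact hn.elim x
  | succ m ih =>
    intro ψ P hm hψ hrow hP
    by_cases hm1 : m = 0
    · obtain ⟨Q, hQ⟩ := exists_ker (fun _ : Fin n => ())
      refine ⟨Q, refine_path G _ _ P Q le_rfl (ker_le hP hQ (fun _ _ _ => rfl)) ?_, ?_⟩
      · intro R hPR _ A hA
        refine (red_bound G hP hPR A ((Finset.range Cn).image fun c => (0, 0, c)) ?_).trans ?_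
        · intro B _ b _ _
          rw [Finset.mem_image]
          refine ⟨col b, Finset.mem_range.2 (hcol b), ?_⟩
          have h1 := hm (b, false)
          have h2 := hm (b, true)
          simp only [vkey, Prod.mk.injEq, and_true]
          omega
        · refine Finset.card_image_le.trans ?_
          rw [Finset.card_range]
          omega
      · rw [Finset.card_le_one]
        intro A hA B hB
        obtain ⟨x, hx⟩ := Q.nonempty_of_mem_parts hA
        obtain ⟨y, hy⟩ := Q.nonempty_of_mem_parts hB
        exact Q.eq_of_mem_parts hA hB ((hQ A hA x hx y).2 rfl) hy
    · obtain ⟨j, hj, hrow'⟩ := merge_count (pairSet ψ) (m := m + 1) (by omega) hd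
        (hMT (m + 1) ψ hm hψ) hrow
      obtain ⟨ψ', hψ'def⟩ : ∃ ψ' : Fin n × Bool → ℕ, ψ' = fun p => clps j (ψ p) := ⟨_, rfl⟩
      have hψ' : ∀ p q, ψ' p < ψ' q → endp l r p < endp l r q := by
        intro p q hpq
        apply hψ
        simp only [hψ'def, clps] at hpq
        split_ifs at hpq <;> omega
      have hm' : ∀ p, ψ' p < m := by
        intro p
        have := hm p
        simp only [hψ'def, clps]
        split_ifs <;> omega
      have hpair : pairSet ψ' = (pairSet ψ).image (fun p => (clps j p.1, clps j p.2)) := by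
        rw [pairSet, pairSet, Finset.image_image]
        subst hψ'def
        rfl
      obtain ⟨Q, hQ⟩ := exists_ker (vkey ψ' col)
      have hPQ : P ≤ Q := by
        apply ker_le hP hQ
        intro a b hab
        obtain ⟨h1, h2⟩ := vkey_eq hab
        simp only [vkey, hψ'def, h1, h2]
      obtain ⟨T, hT, hT1⟩ := ih ψ' Q hm' hψ' (by rw [hpair]; exact hrow') hQ
      refine ⟨T, Relation.ReflTransGen.trans (refine_path G _ _ P Q le_rfl hPQ ?_) hT, hT1⟩
      intro R hPR hRQ A hA
      obtain ⟨a, ha⟩ := R.nonempty_of_mem_parts hA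
      let K : Finset (ℕ × ℕ × ℕ) := (univ : Finset (Bool × Bool × Bool)).biUnion fun t =>
        (((pairSet ψ).filter fun p => p.1 = ψ' (a, t.2.1) + (if t.2.2 then 1 else 0)) ×ˢ
          Finset.range Cn).image
          (fun pc => if t.1 then (pc.1.2, pc.1.1, pc.2) else (pc.1.1, pc.1.2, pc.2))
      have hK : K.card ≤ 8 * (d * Cn) := by
        have : K.card ≤ (univ : Finset (Bool × Bool × Bool)).card * (d * Cn) := by
          apply Finset.card_biUnion_le_card_mul
          intro t _
          refine Finset.card_image_le.trans ?_
          rw [Finset.card_product, Finset.card_range]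
          exact Nat.mul_le_mul_right _ (hrow _)
        simpa using this
      refine (red_bound G hP hPR A K ?_).trans (by omega)
      intro B hB b hb hnh
      have hex : ∃ x y, ψ' (b, x) = ψ' (a, y) := by
        by_contra hc
        push Not at hc
        apply hnh
        obtain ⟨A', hA', hAA'⟩ := hRQ hA
        obtain ⟨B', hB', hBB'⟩ := hRQ hB
        have hcong : ∀ a' ∈ A, ∀ b' ∈ B, (G.Adj a' b' ↔ G.Adj a b) := by
          intro a' ha' b' hb'
          exact adj_congr hrep hG hψ' hc ((hQ A' hA' a (hAA' ha) a').1 (hAA' ha'))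
            ((hQ B' hB' b (hBB' hb) b').1 (hBB' hb'))
        by_cases hadj : G.Adj a b
        · exact Or.inl fun a' ha' b' hb' => (hcong a' ha' b' hb').2 hadj
        · exact Or.inr fun a' ha' b' hb' h => hadj ((hcong a' ha' b' hb').1 h)
      obtain ⟨x, y, hxy⟩ := hex
      have hz : ∃ z : Bool, ψ (b, x) = ψ' (a, y) + (if z then 1 else 0) := by
        rw [← hxy]
        simp only [hψ'def, clps]
        by_cases h : ψ (b, x) ≤ j
        · exact ⟨false, by simp [h]⟩
        · refine ⟨true, ?_⟩
          simp only [h, if_false, if_true]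
          omega
      obtain ⟨z, hz⟩ := hz
      simp only [K, Finset.mem_biUnion, Finset.mem_univ, true_and]
      refine ⟨(x, y, z), ?_⟩
      rw [Finset.mem_image]
      refine ⟨((ψ (b, x), ψ (b, !x)), col b), ?_, ?_⟩
      · rw [Finset.mem_product, Finset.mem_filter]
        exact ⟨⟨Finset.mem_image.2 ⟨(b, x), Finset.mem_univ _, rfl⟩, hz⟩,
          Finset.mem_range.2 (hcol b)⟩
      · cases x <;> simp [vkey]

theorem tww_of_MT {n : ℕ} {G₀ G : SimpleGraph (Fin n)} {l r : Fin n → ℚ}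
    (hrep : CircleRep G₀ l r) {col : Fin n → ℕ} {s : ℕ → ℕ → Prop}
    (hG : ∀ u v, u ≠ v → (G.Adj u v ↔ Xor' (G₀.Adj u v) (s (col u) (col v))))
    (Cn N d : ℕ) (hcol : ∀ v, col v < Cn) (hd : 4 * N ≤ d) (hd1 : 1 ≤ d)
    (hMT : ∀ (m : ℕ) (ψ : Fin n × Bool → ℕ), (∀ p, ψ p < m) →
      (∀ p q, ψ p < ψ q → endp l r p < endp l r q) → (pairSet ψ).card ≤ N * m) :
    TwinWidthLE G (8 * (d * Cn) + Cn) := by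
  classical
  obtain ⟨ψ, hψd⟩ : ∃ ψ : Fin n × Bool → ℕ, ψ = fun p =>
    ((univ : Finset (Fin n × Bool)).filter fun q => endp l r q < endp l r p).card := ⟨_, rfl⟩
  have hmono : ∀ p q, endp l r p < endp l r q → ψ p < ψ q := by
    intro p q hpq
    rw [hψd]
    apply Finset.card_lt_card
    rw [Finset.ssubset_iff_of_subset]
    · exact ⟨p, by simpa using hpq, by simp⟩
    · intro x hx
      simp only [Finset.mem_filter, Finset.mem_univ, true_and] at hx ⊢
      exact hx.trans hpq
  have hinj : Function.Injective ψ := by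
    intro p q hpq
    apply hrep.2.1
    by_contra hne
    rcases lt_or_gt_of_ne hne with h | h
    · exact absurd (hmono _ _ h) (by omega)
    · exact absurd (hmono _ _ h) (by omega)
  have hψ : ∀ p q, ψ p < ψ q → endp l r p < endp l r q := by
    intro p q hpq
    by_contra hc
    rcases lt_or_eq_of_le (not_lt.1 hc) with h | h
    · exact absurd (hmono _ _ h) (by omega)
    · rw [hrep.2.1 h] at hpq
      omega
  obtain ⟨P, hP⟩ := exists_ker (vkey ψ col)
  have hsing : ∀ A ∈ P.parts, A.card = 1 := by
    intro A hA
    obtain ⟨x, hx⟩ := P.nonempty_of_mem_parts hA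
    rw [Finset.card_eq_one]
    refine ⟨x, ?_⟩
    ext y
    rw [hP A hA x hx y, Finset.mem_singleton]
    constructor
    · intro h
      have := hinj ((vkey_eq h).1 true)
      simpa using this
    · rintro rfl
      rfl
  obtain ⟨Q, hQ, hQ1⟩ := main_induct hrep hG Cn N d hcol hd hMT
    (((univ : Finset (Fin n × Bool))).card + 1) ψ P
    (fun p => by rw [hψd]; exact Nat.lt_succ_of_le (Finset.card_le_univ _)) hψ
    (by
      intro i
      refine le_trans ?_ hd1
      rw [Finset.card_le_one]
      intro p hp q hq
      simp only [pairSet, Finset.mem_filter, Finset.mem_image, Finset.mem_univ, true_and] at hp hq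
      obtain ⟨⟨p', rfl⟩, hp2⟩ := hp
      obtain ⟨⟨q', rfl⟩, hq2⟩ := hq
      have : p' = q' := hinj (hp2.trans hq2.symm)
      rw [this]) hP
  have hgood : TGood G (8 * (d * Cn) + Cn) P := by
    intro A hA
    refine (red_bound G hP le_rfl A ∅ ?_).trans (by simp)
    intro B hB b hb hnh
    exfalso
    apply hnh
    obtain ⟨x, rfl⟩ := Finset.card_eq_one.1 (hsing A hA)
    obtain ⟨y, rfl⟩ := Finset.card_eq_one.1 (hsing B hB)
    by_cases h : G.Adj x y
    · left; simpa using h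
    · right; simpa using h
  obtain ⟨L, h1, h2, h3, h4⟩ := list_of_steps G _ P Q hQ hgood
  exact ⟨L, ⟨P, h1, hsing⟩, ⟨Q, h2, hQ1⟩, h3, h4⟩

theorem order_equiv {α : Type} [Fintype α] [LinearOrder α] {h : ℕ} (hc : Fintype.card α = h) :
    ∃ e : α ≃ Fin h, ∀ x y, e x < e y ↔ x < y :=
  ⟨(Fintype.orderIsoFinOfCardEq α hc).symm.toEquiv,
    fun x y => (Fintype.orderIsoFinOfCardEq α hc).symm.lt_iff_lt⟩

theorem opp_iff {h : ℕ} (a b c d : Fin h) (n1 : a ≠ b) (n2 : c ≠ d) :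
    ((a < b ∧ d < c) ∨ (b < a ∧ c < d)) ↔ ¬ (a < b ↔ c < d) := by
  rcases lt_or_gt_of_ne n1 with h | h <;> rcases lt_or_gt_of_ne n2 with h' | h' <;>
    simp [h, h', h.not_gt, h'.not_gt]

theorem perm_key {h : ℕ} (H : SimpleGraph (Fin h)) (hH : IsPermutationGraph H) :
    ∃ e1 e2 : Fin h ≃ Fin h, ∀ x y, x ≠ y → (H.Adj x y ↔ ¬ (e1 x < e1 y ↔ e2 x < e2 y)) := by
  obtain ⟨L1, L2, hL⟩ := hH
  obtain ⟨e1, he1⟩ := @order_equiv (Fin h) _ L1 h (by simp)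
  obtain ⟨e2, he2⟩ := @order_equiv (Fin h) _ L2 h (by simp)
  refine ⟨e1, e2, fun x y hxy => ?_⟩
  refine (hL x y hxy).trans ?_
  refine Iff.trans ?_ (opp_iff _ _ _ _ (fun h => hxy (e1.injective h))
    (fun h => hxy (e2.injective h)))
  exact or_congr (and_congr (he1 x y).symm (he2 y x).symm)
    (and_congr (he1 y x).symm (he2 x y).symm)

theorem perm_patterns {h : ℕ} (H : SimpleGraph (Fin h)) (hH : IsPermutationGraph H) (b : Prop) :
    ∃ (e : Fin h ≃ Fin h) (τ : Equiv.Perm (Fin h)), ∀ x y, x ≠ y →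
      (H.Adj x y ↔ Xor' (e x < e y ↔ τ (e x) < τ (e y)) b) := by
  obtain ⟨e1, e2, key⟩ := perm_key H hH
  by_cases hb : b
  · refine ⟨e1, e1.symm.trans e2, fun x y hxy => ?_⟩
    rw [key x y hxy]
    simp [Xor', xor_def, hb]
  · refine ⟨e1, (e1.symm.trans e2).trans Fin.revPerm, fun x y hxy => ?_⟩
    rw [key x y hxy]
    have n2 : e2 x ≠ e2 y := fun h => hxy (e2.injective h)
    simp only [Xor', xor_def, hb, Equiv.trans_apply, Equiv.symm_apply_apply, Fin.revPerm_apply,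
      Fin.rev_lt_rev]
    rcases lt_or_gt_of_ne n2 with h' | h' <;> simp [h', h'.not_gt]

theorem stmt1 (r : ℕ) (C : ∀ n : ℕ, Set (SimpleGraph (Fin n)))
    (hher : Hereditary C)
    (hpert : ∀ n : ℕ, ∀ G ∈ C n,
      ∃ G₀ : SimpleGraph (Fin n), IsCircleGraph G₀ ∧ BoundedPerturbOf r G₀ G) :
    (∃ t : ℕ, ∀ n : ℕ, ∀ G ∈ C n, TwinWidthLE G t) ↔
      (∃ (m : ℕ) (H : SimpleGraph (Fin m)), IsPermutationGraph H ∧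
        ∀ (k : ℕ), ∀ G ∈ C k, ¬ Nonempty (G ≃g H)) := by
  constructor
  · rintro ⟨t, ht⟩
    refine ⟨_, gridGraph (t + 2), gridGraph_perm _, ?_⟩
    rintro k G hG ⟨e⟩
    refine gridGraph_tww t (ht _ _ (hher _ _ _ _ hG ⟨e.symm.toEmbedding.toEmbedding, ?_⟩))
    intro u v
    exact (e.symm.map_rel_iff (a := u) (b := v)).symm
  · rintro ⟨h, H, hH, hno⟩
    obtain ⟨c, hc⟩ := marcus_tardos (h + h)
    refine ⟨8 * ((4 * (2 ^ r * c) + 1) * 2 ^ r) + 2 ^ r, fun n G hG => ?_⟩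
    obtain ⟨G₀, ⟨l, r', hlr, hinj, hadj⟩, L, hL, hGL⟩ := hpert n G hG
    obtain ⟨col, s, hcol, hs⟩ := perturb_color L G₀
    rw [← hGL] at hs
    have hrep : CircleRep G₀ l r' := ⟨hlr, hinj, hadj⟩
    have hcol' : ∀ v, col v < 2 ^ r := fun v =>
      (hcol v).trans_le (Nat.pow_le_pow_right (by norm_num) hL)
    refine tww_of_MT hrep hs (2 ^ r) (2 ^ r * c) _ hcol' (by omega) (by omega) ?_
    intro m ψ hm hψ
    have hsub : pairSet ψ ⊆ (Finset.range (2 ^ r)).biUnion fun i => pairSetC ψ col i := by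
      intro p hp
      simp only [pairSet, pairSetC, Finset.mem_biUnion, Finset.mem_image, Finset.mem_filter,
        Finset.mem_univ, true_and, Finset.mem_range] at hp ⊢
      obtain ⟨q, rfl⟩ := hp
      exact ⟨col q.1, hcol' _, q, rfl, rfl⟩
    refine (Finset.card_le_card hsub).trans ?_
    have : ((Finset.range (2 ^ r)).biUnion fun i => pairSetC ψ col i).card ≤
        (Finset.range (2 ^ r)).card * (c * m) := by
      apply Finset.card_biUnion_le_card_mul
      intro i _
      obtain ⟨e, τ, hτ⟩ := perm_patterns H hH (s i i)
      apply hc m (dbl τ)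
      · intro p hp
        simp only [pairSetC, Finset.mem_image] at hp
        obtain ⟨q, _, rfl⟩ := hp
        exact ⟨hm _, hm _⟩
      · intro hcon
        obtain ⟨f, hf1, hf2⟩ := extract hrep ψ hψ col i τ hcon
        have hHC : H ∈ C h := by
          refine hher _ _ H G hG ⟨e.toEmbedding.trans f, fun u v => ?_⟩
          by_cases huv : u = v
          · subst huv
            simp
          · have h1 : e u ≠ e v := fun h => huv (e.injective h)
            have h2 : f (e u) ≠ f (e v) := fun h => h1 (f.injective h)
            change H.Adj u v ↔ G.Adj (f (e u)) (f (e v))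
            rw [hs _ _ h2, hf1, hf1, hf2 _ _ h1, hτ u v huv]
        exact hno h H hHC ⟨SimpleGraph.Iso.refl⟩
    rw [Finset.card_range, ← mul_assoc] at this
    exact this
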